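/- Fix k > 0 with k ≠ 1, and let ℍ = {ζ ∈ ℂ : Im ζ > 0}. Define f_k(ζ) = (Re ζ)/k + i·k·Im ζ and τ_k(ζ) = ζ/k. Then f_k and τ_k are homeomorphisms of ℍ onto ℍ; τ_k is holomorphic; both extend continuously to the closure of ℍ in ℂ and the extensions agree on the boundary ℝ (both send ξ ∈ ℝ to ξ/k); yet f_k(ζ) ≠ τ_k(ζ) for every ζ ∈ ℍ, so f_k ≠ τ_k. -/

import Mathlib

open Complex

/-- The open upper half-plane in `ℂ`. -/
def UHP : Set ℂ := {ζ : ℂ | 0 < ζ.im}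

/-- The map `f_k(ζ) = (Re ζ)/k + i k Im ζ`. -/
noncomputable def fmap (k : ℝ) (ζ : ℂ) : ℂ :=
  ((ζ.re / k : ℝ) : ℂ) + Complex.I * ((k * ζ.im : ℝ) : ℂ)

/-- The map `τ_k(ζ) = ζ/k`. -/
noncomputable def tmap (k : ℝ) (ζ : ℂ) : ℂ := ζ / (k : ℂ)

/-!
Both maps are diagonal in the coordinates `ζ = x + i y`: `f_k` scales the axes by `(1/k, k)` and
`τ_k` by `(1/k, 1/k)`. A diagonal scaling with nonzero horizontal and positive vertical factor is a
homeomorphism of the upper half-plane, inverted by the reciprocal factors. On the real axis only the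
common horizontal factor is visible, while off it the vertical factors `k ≠ 1/k` tell the two apart.
-/

/-- The diagonal real-linear map `x + i y ↦ a x + i b y` of the plane, the common form of `f_k` and
`τ_k`. -/
def axisScale (a b : ℝ) (ζ : ℂ) : ℂ := ⟨a * ζ.re, b * ζ.im⟩

section AxisScale

variable {a b c d : ℝ}

theorem continuous_axisScale (a b : ℝ) : Continuous (axisScale a b) :=
  equivRealProdCLM.symm.continuous.comp
    ((continuous_re.const_mul a).prodMk (continuous_im.const_mul b))

theorem axisScale_axisScale (a b c d : ℝ) (ζ : ℂ) :
    axisScale a b (axisScale c d ζ) = axisScale (a * c) (b * d) ζ := by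
  simp only [axisScale, mul_assoc]

theorem axisScale_one_one (ζ : ℂ) : axisScale 1 1 ζ = ζ := by
  simp only [axisScale, one_mul]

theorem axisScale_ofReal (a b ξ : ℝ) : axisScale a b ξ = ((a * ξ : ℝ) : ℂ) :=
  Complex.ext rfl (mul_zero b)

theorem invOn_axisScale_inv (ha : a ≠ 0) (hb : b ≠ 0) (s t : Set ℂ) :
    Set.InvOn (axisScale a⁻¹ b⁻¹) (axisScale a b) s t := by
  constructor <;> intro ζ _ <;> simp [axisScale_axisScale, axisScale_one_one, ha, hb]

theorem mapsTo_axisScale_UHP (a : ℝ) (hb : 0 < b) : Set.MapsTo (axisScale a b) UHP UHP :=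
  fun _ hζ ↦ mul_pos hb hζ

theorem bijOn_axisScale_UHP (ha : a ≠ 0) (hb : 0 < b) : Set.BijOn (axisScale a b) UHP UHP :=
  (invOn_axisScale_inv ha hb.ne' UHP UHP).bijOn (mapsTo_axisScale_UHP a hb)
    (mapsTo_axisScale_UHP a⁻¹ (inv_pos.2 hb))

theorem axisScale_ne_axisScale (hbd : b ≠ d) {ζ : ℂ} (hζ : ζ.im ≠ 0) :
    axisScale a b ζ ≠ axisScale c d ζ :=
  fun h ↦ hbd (mul_right_cancel₀ hζ (congrArg im h))

end AxisScale

theorem fmap_eq_axisScale (k : ℝ) : fmap k = axisScale k⁻¹ k := by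
  ext ζ
  apply Complex.ext <;> simp [fmap, axisScale, div_eq_inv_mul, -ofReal_mul, -ofReal_inv]

theorem tmap_eq_axisScale (k : ℝ) : tmap k = axisScale k⁻¹ k⁻¹ := by
  ext ζ
  apply Complex.ext <;> simp [tmap, axisScale, div_eq_inv_mul, ← ofReal_inv]

theorem differentiable_tmap (k : ℝ) : Differentiable ℂ (tmap k) :=
  differentiable_id.div_const (k : ℂ)

/-- Example A of the paper, non-uniqueness phenomenon: for `k > 0`, `k ≠ 1`, the maps
`f_k(ζ) = (Re ζ)/k + i k Im ζ` and `τ_k(ζ) = ζ/k` are homeomorphisms of the upper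
half-plane onto itself (continuous bijections with continuous inverses), `τ_k` is
holomorphic, both extend continuously to the closed half-plane and the extensions agree on
the boundary `ℝ` (sending `ξ` to `ξ/k`), yet `f_k(ζ) ≠ τ_k(ζ)` for every `ζ ∈ ℍ`. -/
theorem example_A_nonuniqueness (k : ℝ) (hk0 : 0 < k) (hk1 : k ≠ 1) :
    Set.BijOn (fmap k) UHP UHP ∧ Set.BijOn (tmap k) UHP UHP ∧
    ContinuousOn (fmap k) (closure UHP) ∧ ContinuousOn (tmap k) (closure UHP) ∧
    (∃ fi : ℂ → ℂ, ContinuousOn fi UHP ∧ Set.InvOn fi (fmap k) UHP UHP) ∧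
    (∃ ti : ℂ → ℂ, ContinuousOn ti UHP ∧ Set.InvOn ti (tmap k) UHP UHP) ∧
    DifferentiableOn ℂ (tmap k) UHP ∧
    (∀ ξ : ℝ, fmap k (ξ : ℂ) = ((ξ / k : ℝ) : ℂ) ∧ tmap k (ξ : ℂ) = ((ξ / k : ℝ) : ℂ)) ∧
    (∀ ζ ∈ UHP, fmap k ζ ≠ tmap k ζ) := by
  have hkinv : k⁻¹ ≠ 0 := inv_ne_zero hk0.ne'
  have hk_ne_inv : k ≠ k⁻¹ := by
    rw [Ne, self_eq_inv₀]
    rintro (hneg | hzero | hone)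
    · linarith
    · exact hk0.ne' hzero
    · exact hk1 hone
  have hcont (a b : ℝ) (s : Set ℂ) : ContinuousOn (axisScale a b) s :=
    (continuous_axisScale a b).continuousOn
  have hhol : DifferentiableOn ℂ (tmap k) UHP := (differentiable_tmap k).differentiableOn
  rw [tmap_eq_axisScale] at hhol ⊢
  rw [fmap_eq_axisScale]
  refine ⟨bijOn_axisScale_UHP hkinv hk0, bijOn_axisScale_UHP hkinv (inv_pos.2 hk0),
    hcont _ _ _, hcont _ _ _,
    ⟨_, hcont _ _ _, invOn_axisScale_inv hkinv hk0.ne' _ _⟩,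
    ⟨_, hcont _ _ _, invOn_axisScale_inv hkinv hkinv _ _⟩,
    hhol, fun ξ ↦ ?_, fun ζ hζ ↦ axisScale_ne_axisScale hk_ne_inv (ne_of_gt hζ)⟩
  rw [div_eq_inv_mul]
  exact ⟨axisScale_ofReal _ _ ξ, axisScale_ofReal _ _ ξ⟩
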